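/- Let k ≥ 3 and let G be an egr(n,k,g,λ) graph with g = 2h+1 odd. Suppose c₁ and c₂ are natural numbers such that for every vertex v of G the number of closed walks of length g−1 based at v equals c₁ and the number of cycle-free closed walks of length g+1 based at v equals c₂. Set B = c₂ + k·(k−1)^{h+1} − kλ. Then n·(c₁·B − k²λ²) ≥ k^{g+1}·c₁ + k^{g−1}·B − 2·k^{g+1}·λ. -/

import Mathlib

/-!
Let `A` be the adjacency matrix of a `k`-regular graph on `n` vertices and `P` the projection onto
the constant vectors. As `A * P = k • P`, the Frobenius inner product of the deflated powers
`A ^ i - k ^ i • P` and `A ^ j - k ^ j • P` is `tr A ^ (i + j) - k ^ (i + j)`. Cauchy–Schwarz for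
`i = h` and `j = h + 1` relates the numbers of closed walks of lengths `2h`, `2h + 1` and `2h + 2`:
`(tr A ^ (2h + 1) - k ^ (2h + 1))² ≤ (tr A ^ (2h) - k ^ (2h)) (tr A ^ (2h + 2) - k ^ (2h + 2))`.

If the girth is `2h + 1`, a closed walk of length at most `2h + 2` is a cycle or cycle-free, and one
of length `2h + 1` is a cycle. Double counting the edges at a vertex gives `kλ` closed walks of
length `2h + 1`. A cycle of length `2h + 1` or `2h + 2` is determined by its first `h + 2` steps,
which form a trail, and at most `k (k - 1) ^ (h + 1)` such trails start at a vertex. So there are at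
most `B = c₂ + k (k - 1) ^ (h + 1) - kλ` closed walks of length `2h + 2` at a vertex. After these
counts are inserted, `k ^ (4h + 2)` cancels and the inequality can be divided by `n`.
-/

open SimpleGraph

/-- `G` is an edge-girth-regular graph with parameters `(n, k, g, lam)`:
a finite simple graph on `n` vertices, `k`-regular, of girth `g`, in which every
edge lies on exactly `lam` cycles of length `g` (each such cycle corresponds to
exactly two closed walks based at an endpoint of the edge and traversing it). -/
def SimpleGraph.IsEGR {V : Type*} (G : SimpleGraph V) (n k g lam : ℕ) : Prop :=
  Finite V ∧ Nat.card V = n ∧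
    (∀ v : V, (G.neighborSet v).ncard = k) ∧
    G.egirth = (g : ℕ∞) ∧
    ∀ u v : V, G.Adj u v →
      Nat.card {p : G.Walk u u // p.IsCycle ∧ p.length = g ∧ s(u, v) ∈ p.edges} = 2 * lam

/-- The number of closed walks of length `l` based at `v`. -/
noncomputable def SimpleGraph.closedWalkCount {V : Type*} (G : SimpleGraph V) (v : V) (l : ℕ) : ℕ :=
  Nat.card {p : G.Walk v v // p.length = l}

/-- The number of cycle-free closed walks of length `l` based at `v`,
i.e. closed walks whose traversed edges form an acyclic subgraph. -/
noncomputable def SimpleGraph.cycleFreeClosedWalkCount {V : Type*} (G : SimpleGraph V) (v : V)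
    (l : ℕ) : ℕ :=
  Nat.card {p : G.Walk v v // p.length = l ∧ p.toSubgraph.coe.IsAcyclic}

namespace EdgeGirthRegular

section Trace

variable {m n K : Type*} [Fintype m] [Fintype n]

section Deflation

lemma trace_transpose_mul_eq_sum_prod [NonUnitalNonAssocSemiring K] (A B : Matrix m n K) :
    (A.transpose * B).trace = ∑ x : n × m, A x.2 x.1 * B x.2 x.1 := by
  simp [Matrix.trace, Matrix.mul_apply, Fintype.sum_prod_type]

variable [DecidableEq n]

lemma pow_mul_eq_pow_smul [CommSemiring K] {M P : Matrix n n K} {c : K} (hMP : M * P = c • P)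
    (i : ℕ) : M ^ i * P = c ^ i • P := by
  induction i with
  | zero => simp
  | succ i ih => rw [pow_succ, Matrix.mul_assoc, hMP, Matrix.mul_smul, ih, smul_smul, pow_succ']

lemma trace_transpose_mul_deflated_pow [CommRing K] {M P : Matrix n n K} {c : K} (hM : M.IsSymm)
    (hP : P.IsSymm) (hPP : P * P = P) (hMP : M * P = c • P) (i j : ℕ) :
    ((M ^ i - c ^ i • P).transpose * (M ^ j - c ^ j • P)).trace =
      (M ^ (i + j)).trace - c ^ (i + j) * P.trace := by
  have hPM : P * M ^ j = c ^ j • P := by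
    simpa [hP.eq, (hM.pow j).eq] using congrArg Matrix.transpose (pow_mul_eq_pow_smul hMP j)
  have hprod : (M ^ i - c ^ i • P) * (M ^ j - c ^ j • P) = M ^ (i + j) - c ^ (i + j) • P := by
    simp only [sub_mul, mul_sub, Matrix.smul_mul, Matrix.mul_smul, pow_mul_eq_pow_smul hMP, hPM,
      hPP, smul_smul, ← pow_add, add_comm j i]
    abel
  rw [((hM.pow i).sub (hP.smul _)).eq, hprod, Matrix.trace_sub, Matrix.trace_smul, smul_eq_mul]

end Deflation

variable [CommRing K] [LinearOrder K] [IsStrictOrderedRing K]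

lemma trace_transpose_mul_self_nonneg (A : Matrix m n K) : 0 ≤ (A.transpose * A).trace := by
  rw [trace_transpose_mul_eq_sum_prod]
  exact Finset.sum_nonneg fun _ _ ↦ mul_self_nonneg _

lemma sq_trace_transpose_mul_le (A B : Matrix m n K) :
    (A.transpose * B).trace ^ 2 ≤ (A.transpose * A).trace * (B.transpose * B).trace := by
  simp only [trace_transpose_mul_eq_sum_prod, ← sq]
  exact Finset.sum_mul_sq_le_sq_mul_sq _ _ _

end Trace

section ConstProj

variable {V : Type*} [Fintype V] {G : SimpleGraph V} [DecidableRel G.Adj] {k : ℕ}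
variable (K : Type*) [Field K]

variable (V) in
/-- The orthogonal projection onto the constant vectors: all entries are `1 / |V|`. -/
def constProj : Matrix V V K := Matrix.of fun _ _ ↦ (Fintype.card V : K)⁻¹

lemma isSymm_constProj : (constProj V K).IsSymm := rfl

lemma adjMatrix_mul_constProj (hreg : G.IsRegularOfDegree k) :
    G.adjMatrix K * constProj V K = (k : K) • constProj V K := by
  ext v w
  simp [constProj, adjMatrix_mul_apply, hreg.degree_eq v]

variable [CharZero K] [Nonempty V]

lemma trace_constProj : (constProj V K).trace = 1 := by
  simp [constProj, Matrix.trace]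

lemma constProj_mul_self : constProj V K * constProj V K = constProj V K := by
  ext
  simp [constProj, Matrix.mul_apply]

lemma trace_transpose_mul_deflated_adjMatrix [DecidableEq V] (hreg : G.IsRegularOfDegree k)
    (i j : ℕ) :
    ((G.adjMatrix K ^ i - (k : K) ^ i • constProj V K).transpose *
        (G.adjMatrix K ^ j - (k : K) ^ j • constProj V K)).trace =
      (G.adjMatrix K ^ (i + j)).trace - (k : K) ^ (i + j) := by
  rw [trace_transpose_mul_deflated_pow (isSymm_adjMatrix G) (isSymm_constProj K)
    (constProj_mul_self K) (adjMatrix_mul_constProj K hreg), trace_constProj, mul_one]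

end ConstProj

section ClosedWalkCount

variable {V : Type*} [Fintype V] {G : SimpleGraph V} [DecidableRel G.Adj] {k : ℕ}

lemma trace_adjMatrix_pow [DecidableEq V] (K : Type*) [Semiring K] (l : ℕ) :
    (G.adjMatrix K ^ l).trace = ∑ v, (G.closedWalkCount v l : K) := by
  simp only [Matrix.trace, Matrix.diag_apply, adjMatrix_pow_apply_eq_card_walk]
  simp only [closedWalkCount, ← Nat.card_eq_fintype_card]
  rfl

variable [Nonempty V]

lemma pow_le_sum_closedWalkCount (hreg : G.IsRegularOfDegree k) (i : ℕ) :
    k ^ (i + i) ≤ ∑ v, G.closedWalkCount v (i + i) := by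
  classical
  have hnonneg := trace_transpose_mul_self_nonneg (G.adjMatrix ℚ ^ i - (k : ℚ) ^ i • constProj V ℚ)
  rw [trace_transpose_mul_deflated_adjMatrix ℚ hreg, trace_adjMatrix_pow, sub_nonneg] at hnonneg
  exact_mod_cast hnonneg

lemma sq_sum_closedWalkCount_sub_le (hreg : G.IsRegularOfDegree k) (i j : ℕ) :
    (∑ v, (G.closedWalkCount v (i + j) : ℤ) - k ^ (i + j)) ^ 2 ≤
      (∑ v, (G.closedWalkCount v (i + i) : ℤ) - k ^ (i + i)) *
        (∑ v, (G.closedWalkCount v (j + j) : ℤ) - k ^ (j + j)) := by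
  classical
  have hcs := sq_trace_transpose_mul_le (G.adjMatrix ℚ ^ i - (k : ℚ) ^ i • constProj V ℚ)
    (G.adjMatrix ℚ ^ j - (k : ℚ) ^ j • constProj V ℚ)
  simp only [trace_transpose_mul_deflated_adjMatrix ℚ hreg, trace_adjMatrix_pow] at hcs
  exact_mod_cast hcs

end ClosedWalkCount

section Girth

variable {V : Type*} {G : SimpleGraph V} {g : ℕ}

lemma exists_closed_subwalk {u v : V} (p : G.Walk u v) (hp : ¬ p.IsPath) :
    ∃ (x : V) (p₁ : G.Walk u x) (p₂ : G.Walk x x) (p₃ : G.Walk x v),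
      p₂.length ≠ 0 ∧ p = p₁.append (p₂.append p₃) := by
  classical
  induction p with
  | nil => simp at hp
  | @cons u _ _ hadj p ih =>
    by_cases hpath : p.IsPath
    · have hu : u ∈ p.support := by
        by_contra hu
        exact hp (hpath.cons hu)
      exact ⟨u, .nil, .cons hadj (p.takeUntil u hu), p.dropUntil u hu, by simp, by simp⟩
    · obtain ⟨x, p₁, p₂, p₃, hp₂, rfl⟩ := ih hpath
      exact ⟨x, .cons hadj p₁, p₂, p₃, hp₂, by simp⟩

lemma isCycle_or_exists_split {v : V} (p : G.Walk v v) (hp : 3 ≤ p.length) :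
    p.IsCycle ∨ ∃ (x : V) (q : G.Walk x x) (r : G.Walk v v), q.length ≠ 0 ∧ r.length ≠ 0 ∧
      p.length = q.length + r.length ∧ p.edges ⊆ q.edges ++ r.edges := by
  cases p with
  | nil => simp at hp
  | cons hadj p =>
    by_cases hpath : p.IsPath
    · exact .inl <| Walk.isCycle_iff_isPath_tail_and_le_length.2 ⟨by simpa using hpath, hp⟩
    · obtain ⟨x, p₁, p₂, p₃, hp₂, rfl⟩ := exists_closed_subwalk p hpath
      refine .inr ⟨x, p₂, .cons hadj (p₁.append p₃), hp₂, by simp,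
        by simp only [Walk.length_append, Walk.length_cons]; omega, fun e ↦ ?_⟩
      simp only [Walk.edges_cons, Walk.edges_append, List.mem_cons, List.mem_append]
      tauto

/-- By induction on the length: a closed walk that is not a cycle splits into two closed walks of
length at least `2`, which are then shorter than every cycle. -/
lemma isCycle_or_even_and_card_edges_le [DecidableEq V] (hg : g ≤ G.egirth) {v : V}
    (p : G.Walk v v) (hp : p.length ≤ g + 1) :
    p.IsCycle ∨ Even p.length ∧ 2 * p.edges.toFinset.card ≤ p.length := by
  induction hl : p.length using Nat.strong_induction_on generalizing v p with
  | _ l ih =>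
  subst hl
  obtain hlt | hle := lt_or_ge p.length 3
  · match p with
    | .nil => simp
    | .cons h .nil => exact (h.ne rfl).elim
    | .cons h (.cons h' .nil) => simp [Sym2.eq_swap]
    | .cons h (.cons h' (.cons h'' p)) => simp only [Walk.length_cons] at hlt; omega
  obtain hc | ⟨x, q, r, hq, hr, hlen, hsub⟩ := isCycle_or_exists_split p hle
  · exact .inl hc
  have hne_one {x : V} (c : G.Walk x x) : c.length ≠ 1 := fun h ↦
    (Walk.adj_of_length_eq_one h).ne rfl
  have hshort {x : V} (c : G.Walk x x) (hc : c.length + 2 ≤ p.length) :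
      Even c.length ∧ 2 * c.edges.toFinset.card ≤ c.length := by
    refine (ih c.length (by omega) c (by omega) rfl).resolve_left fun hcycle ↦ ?_
    have : g ≤ c.length := Nat.cast_le.1 (hg.trans (egirth_le_length hcycle))
    omega
  have hq_ne_one := hne_one q
  have hr_ne_one := hne_one r
  obtain ⟨hq_even, hq_card⟩ := hshort q (by omega)
  obtain ⟨hr_even, hr_card⟩ := hshort r (by omega)
  have hcard : p.edges.toFinset.card ≤ q.edges.toFinset.card + r.edges.toFinset.card :=
    calc p.edges.toFinset.card ≤ (q.edges ++ r.edges).toFinset.card :=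
          Finset.card_le_card fun e he ↦ by simpa using hsub (by simpa using he)
      _ ≤ _ := by rw [List.toFinset_append]; exact Finset.card_union_le _ _
  exact .inr ⟨hlen ▸ hq_even.add hr_even, by omega⟩

lemma isCycle_of_odd_length (hg : g ≤ G.egirth) {v : V} {p : G.Walk v v}
    (hp : p.length ≤ g + 1) (hodd : Odd p.length) : p.IsCycle := by
  classical
  exact (isCycle_or_even_and_card_edges_le hg p hp).resolve_right fun h ↦
    Nat.not_even_iff_odd.2 hodd h.1

lemma isAcyclic_coe_of_encard_edgeSet_lt_egirth {H : G.Subgraph}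
    (hH : H.edgeSet.encard < G.egirth) : H.coe.IsAcyclic := by
  classical
  intro a c hc
  have hcycle := hc.map (f := H.hom) Subgraph.hom_injective
  have hsub : ((c.map H.hom).edges.toFinset : Set (Sym2 V)) ⊆ H.edgeSet := by
    intro e he
    simp only [List.coe_toFinset, Set.mem_ofPred_eq, Walk.edges_map, List.mem_map] at he
    obtain ⟨e, he, rfl⟩ := he
    induction e with
    | _ x y => exact c.edges_subset_edgeSet he
  have hle : ((c.map H.hom).length : ℕ∞) ≤ H.edgeSet.encard := by
    rw [← Walk.length_edges, ← List.toFinset_card_of_nodup hcycle.edges_nodup,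
      ← Set.encard_coe_eq_coe_finsetCard]
    exact Set.encard_le_encard hsub
  exact ((egirth_le_length hcycle).trans hle).not_gt hH

/-- A closed walk that is not a cycle traverses at most half as many edges as it has steps, too few
to contain a cycle. -/
lemma isCycle_or_isAcyclic (hg : g ≤ G.egirth) {v : V} (p : G.Walk v v) (hp : p.length ≤ g + 1) :
    p.IsCycle ∨ p.toSubgraph.coe.IsAcyclic := by
  classical
  refine (isCycle_or_even_and_card_edges_le hg p hp).imp_right ?_
  rintro ⟨-, hcard⟩
  apply isAcyclic_coe_of_encard_edgeSet_lt_egirth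
  have hedges : p.toSubgraph.edgeSet = p.edges.toFinset := by
    ext e
    simp
  have hlt : p.edges.toFinset.card < max g 3 := by omega
  rw [hedges, Set.encard_coe_eq_coe_finsetCard]
  calc (p.edges.toFinset.card : ℕ∞) < (max g 3 : ℕ) := Nat.cast_lt.2 hlt
    _ ≤ G.egirth := by
      obtain h | h := max_choice g 3 <;> rw [h]
      exacts [hg, three_le_egirth]

end Girth

section Trails

variable {V : Type*} {G : SimpleGraph V} {k l m r : ℕ} {F : Set (Sym2 V)} {u v w : V}

variable (G) in
/-- The trails of length `l` from `u` that traverse no edge of `F`, bundled with their end vertex.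
Forbidding edges makes trails amenable to induction: after a first step along `e`, the rest of a
trail avoids `e`. -/
def trailsAvoiding (F : Set (Sym2 V)) (u : V) (l : ℕ) : Set (Σ x, G.Walk u x) :=
  {p | p.2.IsTrail ∧ p.2.length = l ∧ ∀ e ∈ p.2.edges, e ∉ F}

lemma trailsAvoiding_succ_subset :
    trailsAvoiding G F u (l + 1) ⊆ ⋃ y : {y // G.Adj u y ∧ s(u, y) ∉ F},
      (fun q ↦ ⟨q.1, .cons y.2.1 q.2⟩) '' trailsAvoiding G {s(u, y)} y l := by
  rintro ⟨x, p⟩ ⟨htrail, hlength, havoid⟩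
  cases p with
  | nil => simp at hlength
  | @cons _ y _ hadj p =>
    obtain ⟨hp, hnotMem⟩ := Walk.isTrail_cons _ _ |>.1 htrail
    refine Set.mem_iUnion.2 ⟨⟨y, hadj, havoid _ (by simp)⟩, ⟨x, p⟩,
      ⟨hp, by simpa using hlength, ?_⟩, rfl⟩
    rintro e he rfl
    exact hnotMem he

lemma encard_trailsAvoiding_succ_le [G.LocallyFinite] {B : ℕ∞}
    (hB : ∀ y, G.Adj u y → (trailsAvoiding G {s(u, y)} y l).encard ≤ B) :
    (trailsAvoiding G F u (l + 1)).encard ≤ {y | G.Adj u y ∧ s(u, y) ∉ F}.encard * B := by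
  have : Finite {y // G.Adj u y ∧ s(u, y) ∉ F} :=
    (G.neighborSet u).toFinite.subset fun _ hy ↦ hy.1
  have := Fintype.ofFinite {y // G.Adj u y ∧ s(u, y) ∉ F}
  calc (trailsAvoiding G F u (l + 1)).encard
    _ ≤ ∑ y : {y // G.Adj u y ∧ s(u, y) ∉ F}, (trailsAvoiding G {s(u, ↑y)} y l).encard :=
      (Set.encard_le_encard trailsAvoiding_succ_subset).trans <|
        (Set.encard_iUnion_le_of_fintype _).trans <|
          Finset.sum_le_sum fun _ _ ↦ Set.encard_image_le _ _
    _ ≤ ∑ _y : {y // G.Adj u y ∧ s(u, y) ∉ F}, B := Finset.sum_le_sum fun y _ ↦ hB y y.2.1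
    _ = {y | G.Adj u y ∧ s(u, y) ∉ F}.encard * B := by
      rw [Finset.sum_const, nsmul_eq_mul, Finset.card_univ, ← ENat.card_eq_coe_fintype_card]
      rfl

lemma encard_neighborSet [G.LocallyFinite] (hreg : G.IsRegularOfDegree k) :
    (G.neighborSet v).encard = k := by
  rw [← coe_neighborFinset, Set.encard_coe_eq_coe_finsetCard, card_neighborFinset_eq_degree,
    hreg.degree_eq]

lemma encard_trailsAvoiding_edge_le [G.LocallyFinite] (hreg : G.IsRegularOfDegree k)
    (huw : G.Adj u w) : (trailsAvoiding G {s(u, w)} w l).encard ≤ (k - 1 : ℕ) ^ l := by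
  induction l generalizing u w with
  | zero =>
    refine Set.encard_le_one_iff.2 ?_
    rintro ⟨_, _ | _⟩ ⟨_, _ | _⟩ ⟨-, hp, -⟩ ⟨-, hq, -⟩ <;> simp_all
  | succ l ih =>
    have hnext :
        {y | G.Adj w y ∧ s(w, y) ∉ ({s(u, w)} : Set (Sym2 V))} = G.neighborSet w \ {u} := by
      ext y
      simp only [Set.mem_ofPred_eq, Set.mem_singleton_iff, Set.mem_sdiff, mem_neighborSet]
      grind [Sym2.eq_swap]
    have hcard : (G.neighborSet w \ {u}).encard = (k - 1 : ℕ) := by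
      rw [Set.encard_sdiff_singleton_of_mem (s := G.neighborSet w) huw.symm,
        encard_neighborSet hreg, ENat.natCast_sub, Nat.cast_one]
    calc _ ≤ _ := encard_trailsAvoiding_succ_le fun y hy ↦ ih hy
      _ = _ := by rw [hnext, hcard, pow_succ']

lemma encard_trails_le [G.LocallyFinite] (hreg : G.IsRegularOfDegree k) :
    {p : Σ x, G.Walk v x | p.2.IsTrail ∧ p.2.length = l + 1}.encard ≤ (k * (k - 1) ^ l : ℕ) := by
  have hempty : {p : Σ x, G.Walk v x | p.2.IsTrail ∧ p.2.length = l + 1} =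
      trailsAvoiding G ∅ v (l + 1) := by
    simp [trailsAvoiding]
  have hcard : {y | G.Adj v y ∧ s(v, y) ∉ (∅ : Set (Sym2 V))}.encard = k := by
    simpa [neighborSet] using encard_neighborSet hreg (v := v)
  calc _ ≤ _ := hempty ▸ encard_trailsAvoiding_succ_le fun y hy ↦
        encard_trailsAvoiding_edge_le hreg hy
    _ = _ := by rw [hcard]; norm_cast

lemma path_eq_of_length_add_lt_egirth {p q : G.Walk u v} (hp : p.IsPath) (hq : q.IsPath)
    (hlt : (p.length + q.length : ℕ) < G.egirth) : p = q := by
  by_contra hne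
  obtain ⟨_, -, -, c, hc, hle⟩ := hp.exists_isCycle_length_le_add_of_ne hq hne
  exact ((egirth_le_length hc).trans (Nat.cast_le.2 hle)).not_gt hlt

lemma append_eq_append_of_prefix_eq {t : G.Walk v u} {d : G.Walk u v} {t' : G.Walk v w}
    {d' : G.Walk w v} (hprefix : (⟨u, t⟩ : Σ x, G.Walk v x) = ⟨w, t'⟩) (hd : d.IsPath)
    (hd' : d'.IsPath) (hlt : (d.length + d'.length : ℕ) < G.egirth) :
    t.append d = t'.append d' := by
  cases hprefix
  rw [path_eq_of_length_add_lt_egirth hd hd' hlt]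

/-- Such a cycle is determined by its first `m` steps, as the rest is a path of length at most `r`
and two such paths with the same ends coincide. -/
lemma encard_cycles_le_encard_trails (hm : 0 < m) (hr : (2 * r : ℕ) < G.egirth) :
    {p : G.Walk v v | p.IsCycle ∧ m ≤ p.length ∧ p.length ≤ m + r}.encard ≤
      {p : Σ x, G.Walk v x | p.2.IsTrail ∧ p.2.length = m}.encard := by
  refine Set.encard_le_encard_of_injOn (f := fun p ↦ ⟨_, p.take m⟩) ?_ ?_
  · rintro p ⟨hp, hle, -⟩
    exact ⟨.of_append_left (q := p.drop m) (by simpa using hp.isTrail), by simpa using hle⟩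
  · rintro p ⟨hp, -, hp_le⟩ q ⟨hq, -, hq_le⟩ hprefix
    rw [← p.append_take_drop_eq m, ← q.append_take_drop_eq m]
    refine append_eq_append_of_prefix_eq hprefix (hp.isPath_drop hm) (hq.isPath_drop hm)
      (lt_of_le_of_lt (Nat.cast_le.2 ?_) hr)
    simp only [Walk.drop_length]
    omega

/-- Double counting of the pairs of an edge at `v` and a cycle through it: every cycle based at `v`
uses two edges at `v`. -/
lemma degree_mul_eq_two_mul_card_cycles [DecidableEq V] [Fintype (G.neighborSet v)]
    {S : Finset (G.Walk v v)} (hS : ∀ p ∈ S, p.IsCycle)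
    (hm : ∀ u, G.Adj v u → {p ∈ S | s(v, u) ∈ p.edges}.card = m) :
    G.degree v * m = 2 * S.card := by
  have hedges : ∀ p ∈ S, {u ∈ G.neighborFinset v | s(v, u) ∈ p.edges}.card = 2 := by
    intro p hp
    rw [← (hS p hp).ncard_neighborSet_toSubgraph_eq_two p.start_mem_support,
      ← Set.ncard_coe_finset]
    congr 1
    ext u
    simpa [← Subgraph.mem_edgeSet] using p.adj_of_mem_edges
  rw [← card_neighborFinset_eq_degree, mul_comm 2]
  exact Finset.card_mul_eq_card_mul (fun u (p : G.Walk v v) ↦ s(v, u) ∈ p.edges)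
    (fun u hu ↦ hm u (by simpa using hu)) hedges

end Trails

section Counting

variable {V : Type*} {G : SimpleGraph V} [G.LocallyFinite] {k h l m : ℕ} {v : V}

lemma finite_closedWalks : {p : G.Walk v v | p.length = l}.Finite := by
  classical
  exact G.coe_finsetWalkLength_eq l v v ▸ Finset.finite_toSet _

lemma coe_closedWalkCount :
    (G.closedWalkCount v l : ℕ∞) = {p : G.Walk v v | p.length = l}.encard :=
  finite_closedWalks.cast_ncard_eq

lemma coe_cycleFreeClosedWalkCount :
    (G.cycleFreeClosedWalkCount v l : ℕ∞) =
      {p : G.Walk v v | p.length = l ∧ p.toSubgraph.coe.IsAcyclic}.encard :=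
  (finite_closedWalks.subset fun _ hp ↦ hp.1).cast_ncard_eq

lemma two_mul_closedWalkCount_eq_degree_mul (hgirth : (2 * h + 1 : ℕ) ≤ G.egirth)
    (hm : ∀ u, G.Adj v u →
      Nat.card {p : G.Walk v v // p.IsCycle ∧ p.length = 2 * h + 1 ∧ s(v, u) ∈ p.edges} = m) :
    2 * G.closedWalkCount v (2 * h + 1) = G.degree v * m := by
  classical
  have hcycle : ∀ p ∈ G.finsetWalkLength (2 * h + 1) v v, p.IsCycle := by
    intro p hp
    rw [mem_finsetWalkLength_iff] at hp
    exact isCycle_of_odd_length hgirth (by omega) (hp ▸ odd_two_mul_add_one h)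
  have hcount : G.closedWalkCount v (2 * h + 1) = (G.finsetWalkLength (2 * h + 1) v v).card :=
    Nat.subtype_card _ fun p ↦ mem_finsetWalkLength_iff
  rw [hcount, degree_mul_eq_two_mul_card_cycles hcycle fun u hu ↦ ?_]
  rw [← hm u hu]
  refine (Nat.subtype_card _ fun p ↦ ?_).symm
  rw [Finset.mem_filter, ← and_assoc, mem_finsetWalkLength_iff]
  exact and_congr_left fun _ ↦
    ⟨fun hp ↦ ⟨hcycle p (mem_finsetWalkLength_iff.2 hp), hp⟩, fun hp ↦ hp.2⟩

lemma encard_cycles_le (hreg : G.IsRegularOfDegree k) (hgirth : (2 * h + 1 : ℕ) ≤ G.egirth) :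
    {p : G.Walk v v | p.IsCycle ∧ (p.length = 2 * h + 1 ∨ p.length = 2 * h + 2)}.encard ≤
      (k * (k - 1) ^ (h + 1) : ℕ) := by
  have hsub : {p : G.Walk v v | p.IsCycle ∧ (p.length = 2 * h + 1 ∨ p.length = 2 * h + 2)} ⊆
      {p | p.IsCycle ∧ h + 2 ≤ p.length ∧ p.length ≤ h + 2 + h} := by
    rintro p ⟨hp, hlength⟩
    have := hp.three_le_length
    exact ⟨hp, by omega, by omega⟩
  exact (Set.encard_le_encard hsub).trans <| (encard_cycles_le_encard_trails (by omega) <|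
    hgirth.trans_lt' <| Nat.cast_lt.2 <| Nat.lt_succ_self _).trans (encard_trails_le hreg)

lemma closedWalkCount_add_closedWalkCount_le (hreg : G.IsRegularOfDegree k)
    (hgirth : (2 * h + 1 : ℕ) ≤ G.egirth) :
    G.closedWalkCount v (2 * h + 2) + G.closedWalkCount v (2 * h + 1) ≤
      G.cycleFreeClosedWalkCount v (2 * h + 2) + k * (k - 1) ^ (h + 1) := by
  set even : Set (G.Walk v v) := {p | p.length = 2 * h + 2}
  set odd : Set (G.Walk v v) := {p | p.length = 2 * h + 1}
  set cycleFree : Set (G.Walk v v) := {p | p.length = 2 * h + 2 ∧ p.toSubgraph.coe.IsAcyclic}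
  set cycles : Set (G.Walk v v) :=
    {p | p.IsCycle ∧ (p.length = 2 * h + 1 ∨ p.length = 2 * h + 2)}
  have hdisj : Disjoint even odd :=
    Set.disjoint_left.2 fun p (hp : p.length = _) (hp' : p.length = _) ↦ by omega
  have hsub : even ∪ odd ⊆ cycleFree ∪ cycles := by
    rintro p (hp | hp)
    · exact (isCycle_or_isAcyclic hgirth p hp.le).symm.imp (⟨hp, ·⟩) (⟨·, .inr hp⟩)
    · exact .inr ⟨isCycle_of_odd_length hgirth (hp.le.trans (Nat.le_succ _))
        (hp ▸ odd_two_mul_add_one h), .inl hp⟩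
  rw [← Nat.cast_le (α := ℕ∞), Nat.cast_add, Nat.cast_add, coe_closedWalkCount,
    coe_closedWalkCount, coe_cycleFreeClosedWalkCount]
  calc even.encard + odd.encard
    _ = (even ∪ odd).encard := (Set.encard_union_eq hdisj).symm
    _ ≤ (cycleFree ∪ cycles).encard := Set.encard_le_encard hsub
    _ ≤ cycleFree.encard + cycles.encard := Set.encard_union_le _ _
    _ ≤ cycleFree.encard + (k * (k - 1) ^ (h + 1) : ℕ) := by
      gcongr
      exact encard_cycles_le hreg hgirth

end Counting

section IsEGR

variable {V : Type*} {G : SimpleGraph V} {n k g h lam : ℕ}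

lemma nonempty_of_isEGR (hegr : G.IsEGR n k g lam) : Nonempty V := by
  obtain ⟨-, -, -, hgirth, -⟩ := hegr
  by_contra hempty
  rw [not_nonempty_iff] at hempty
  rw [egirth_eq_top.2 fun v ↦ hempty.elim v] at hgirth
  exact ENat.top_ne_natCast g hgirth

lemma isRegularOfDegree_of_isEGR [G.LocallyFinite] (hegr : G.IsEGR n k g lam) :
    G.IsRegularOfDegree k := by
  obtain ⟨-, -, hdeg, -, -⟩ := hegr
  intro v
  rw [← hdeg v, ← card_neighborFinset_eq_degree, ← Set.ncard_coe_finset, coe_neighborFinset]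

lemma closedWalkCount_girth_of_isEGR [G.LocallyFinite] (hegr : G.IsEGR n k (2 * h + 1) lam)
    (v : V) : G.closedWalkCount v (2 * h + 1) = k * lam := by
  have hreg := isRegularOfDegree_of_isEGR hegr
  obtain ⟨-, -, -, hgirth, hlam⟩ := hegr
  have hcount := two_mul_closedWalkCount_eq_degree_mul hgirth.ge (hlam v)
  rw [hreg.degree_eq] at hcount
  linarith

end IsEGR

end EdgeGirthRegular

open EdgeGirthRegular

theorem egr_odd_girth_lower_bound_general {V : Type*} [Fintype V] [Nonempty V]
    (G : SimpleGraph V) [DecidableRel G.Adj] {k h c₁ c₂ q : ℕ} (hreg : G.IsRegularOfDegree k)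
    (hgirth : (2 * h + 1 : ℕ) ≤ G.egirth)
    (hc₁ : ∀ v, G.closedWalkCount v (2 * h) = c₁)
    (hq : ∀ v, G.closedWalkCount v (2 * h + 1) = q)
    (hc₂ : ∀ v, G.cycleFreeClosedWalkCount v (2 * h + 2) = c₂) :
    (Fintype.card V : ℤ) * (c₁ * (c₂ + k * (k - 1) ^ (h + 1) - q) - q ^ 2) ≥
      k ^ (2 * h + 2) * c₁ + k ^ (2 * h) * (c₂ + k * (k - 1) ^ (h + 1) - q)
        - 2 * k ^ (2 * h + 1) * q := by
  set n : ℤ := (Fintype.card V : ℤ)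
  set B : ℤ := c₂ + k * (k - 1) ^ (h + 1) - q
  have hB (v : V) : (G.closedWalkCount v (2 * h + 2) : ℤ) ≤ B := by
    have hcount := closedWalkCount_add_closedWalkCount_le (v := v) hreg hgirth
    rw [hq v, hc₂ v] at hcount
    have hcast : ((k * (k - 1) ^ (h + 1) : ℕ) : ℤ) = k * (k - 1) ^ (h + 1) := by
      cases k <;> simp
    rw [le_sub_iff_add_le, ← hcast]
    exact_mod_cast hcount
  have hsum : ∑ v, (G.closedWalkCount v (2 * h + 2) : ℤ) ≤ n * B := by
    simpa [n] using Finset.sum_le_sum fun v (_ : v ∈ Finset.univ) ↦ hB v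
  have hle : (k : ℤ) ^ (2 * h) ≤ n * c₁ := by
    have hpow := pow_le_sum_closedWalkCount hreg h
    simp only [← two_mul, hc₁, Finset.sum_const, Finset.card_univ, smul_eq_mul] at hpow
    simp only [n]
    exact_mod_cast hpow
  have hcs : (n * q - k ^ (2 * h + 1)) ^ 2 ≤
      (n * c₁ - k ^ (2 * h)) * (n * B - k ^ (2 * h + 2)) := by
    have hsq := sq_sum_closedWalkCount_sub_le hreg h (h + 1)
    rw [← two_mul, ← two_mul, ← add_assoc, ← two_mul, mul_add, mul_one] at hsq
    simp only [hq, hc₁, Finset.sum_const, Finset.card_univ, nsmul_eq_mul] at hsq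
    exact hsq.trans <|
      mul_le_mul_of_nonneg_left (sub_le_sub_right hsum _) (sub_nonneg.2 hle)
  have hn : 0 < n := Nat.cast_pos.2 Fintype.card_pos
  refine le_of_mul_le_mul_left ?_ hn
  linear_combination hcs

/-- Let `k ≥ 3` and let `G` be an `egr(n, k, g, λ)` graph with `g = 2h + 1` odd. Suppose
every vertex of `G` lies on exactly `c₁` closed walks of length `g - 1` and on exactly
`c₂` cycle-free closed walks of length `g + 1`. Setting `B = c₂ + k(k-1)^(h+1) - kλ`,
we have `n(c₁B - k²λ²) ≥ k^(g+1)c₁ + k^(g-1)B - 2k^(g+1)λ`. -/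
theorem egr_odd_girth_lower_bound (n k g lam h c₁ c₂ : ℕ) (hk : 3 ≤ k)
    (hg : g = 2 * h + 1) {V : Type*} (G : SimpleGraph V) (hegr : G.IsEGR n k g lam)
    (hc₁ : ∀ v : V, G.closedWalkCount v (g - 1) = c₁)
    (hc₂ : ∀ v : V, G.cycleFreeClosedWalkCount v (g + 1) = c₂) :
    (n : ℤ) * ((c₁ : ℤ) * ((c₂ : ℤ) + k * ((k : ℤ) - 1) ^ (h + 1) - k * lam)
        - (k : ℤ) ^ 2 * (lam : ℤ) ^ 2) ≥
      (k : ℤ) ^ (g + 1) * c₁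
        + (k : ℤ) ^ (g - 1) * ((c₂ : ℤ) + k * ((k : ℤ) - 1) ^ (h + 1) - k * lam)
        - 2 * (k : ℤ) ^ (g + 1) * lam := by
  classical
  subst hg
  obtain ⟨_, hcard, -, hgirth, -⟩ := id hegr
  have := Fintype.ofFinite V
  have := nonempty_of_isEGR hegr
  have hbound := egr_odd_girth_lower_bound_general G (isRegularOfDegree_of_isEGR hegr)
    hgirth.ge hc₁ (closedWalkCount_girth_of_isEGR hegr) hc₂
  rw [← Nat.card_eq_fintype_card, hcard] at hbound
  push_cast at hbound
  simp only [Nat.add_sub_cancel]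
  linear_combination hbound
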